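/- arXiv:1110.5277 — 3 statements merged into one kernel-verified Lean document; each statement's English description precedes it below -/
import Mathlib

section
/- Let α ∈ ℝ and 0 < β ≤ 1/4. Then Θ_α(|p|²) = |Θ_α(p)|² for every p ∈ 𝔗₁(F₁(α,β)), and consequently Θ_α maps 𝔖₁(F₁(α,β)) = {|p|² : p ∈ 𝔗₁(F₁(α,β))} onto 𝔖₂(F₂(α,β)) = {|q|² : q ∈ 𝔗₂(F₂(α,β))}. -/
open Complex MeasureTheory Real Filter

noncomputable section

/-- The circle group `𝕋 = ℝ/ℤ`. -/
abbrev 𝕋 := AddCircle (1 : ℝ)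

/-- `θ_α(j)` : the smallest integer minimizing `|θ_α(j) − jα|`
(the nearest integer to `jα`, rounding half down). -/
def thetaA (α : ℝ) (j : ℤ) : ℤ := ⌈(j : ℝ) * α - 1 / 2⌉

/-- The Bohr set `F₁(α,β) = {j ∈ ℤ : |θ_α(j) − jα| < β}`. -/
def F1set (α β : ℝ) : Set ℤ := {j | |(thetaA α j : ℝ) - (j : ℝ) * α| < β}

/-- `F₂(α,β) = {(j,k) ∈ ℤ² : |k − jα| < β}`. -/
def F2set (α β : ℝ) : Set (ℤ × ℤ) := {jk | |(jk.2 : ℝ) - (jk.1 : ℝ) * α| < β}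

/-- `t : 𝕋 → ℂ` is a trigonometric polynomial. -/
def IsTrigPoly1 (t : 𝕋 → ℂ) : Prop :=
  ∃ c : ℤ →₀ ℂ, t = fun x => ∑ j ∈ c.support, c j * fourier j x

/-- The frequency set of `t : 𝕋 → ℂ`. -/
def freq1 (t : 𝕋 → ℂ) : Set ℤ := {j | fourierCoeff t j ≠ 0}

/-- `𝔗₁(F)` : trigonometric polynomials on `𝕋` with frequencies in `F`. -/
def T1 (F : Set ℤ) : Set (𝕋 → ℂ) := {t | IsTrigPoly1 t ∧ freq1 t ⊆ F}

/-- `t : 𝕋² → ℂ` is a trigonometric polynomial. -/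
def IsTrigPoly2 (t : 𝕋 × 𝕋 → ℂ) : Prop :=
  ∃ c : (ℤ × ℤ) →₀ ℂ, t = fun p => ∑ jk ∈ c.support, c jk * fourier jk.1 p.1 * fourier jk.2 p.2

/-- Fourier coefficient on the 2-torus. -/
def coeff2 (t : 𝕋 × 𝕋 → ℂ) (jk : ℤ × ℤ) : ℂ :=
  ∫ x : 𝕋, (∫ y : 𝕋, t (x, y) * fourier (-jk.1) x * fourier (-jk.2) y
    ∂AddCircle.haarAddCircle) ∂AddCircle.haarAddCircle

/-- The frequency set of `t : 𝕋² → ℂ`. -/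
def freq2 (t : 𝕋 × 𝕋 → ℂ) : Set (ℤ × ℤ) := {jk | coeff2 t jk ≠ 0}

/-- `𝔗₂(F)` : trigonometric polynomials on `𝕋²` with frequencies in `F`. -/
def T2 (F : Set (ℤ × ℤ)) : Set (𝕋 × 𝕋 → ℂ) := {t | IsTrigPoly2 t ∧ freq2 t ⊆ F}

/-- The map `Θ_α : 𝔗₁ → 𝔗₂`, `Θ_α(t)(x,y) = Σ_j t̂(j) e_j(x) e_{θ_α(j)}(y)`. -/
def Theta (α : ℝ) (t : 𝕋 → ℂ) : 𝕋 × 𝕋 → ℂ :=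
  fun p => ∑' j : ℤ, fourierCoeff t j * fourier j p.1 * fourier (thetaA α j) p.2

/-- `𝔖₁(F) = {|p|² : p ∈ 𝔗₁(F)}`. -/
def S1 (F : Set ℤ) : Set (𝕋 → ℂ) :=
  {f | ∃ p ∈ T1 F, f = fun x => p x * (starRingEnd ℂ) (p x)}

/-- `𝔖₂(F) = {|q|² : q ∈ 𝔗₂(F)}`. -/
def S2 (F : Set (ℤ × ℤ)) : Set (𝕋 × 𝕋 → ℂ) :=
  {f | ∃ q ∈ T2 F, f = fun p => q p * (starRingEnd ℂ) (q p)}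

/-- `𝔘₁(F)` : trigonometric polynomials that are uniform limits of elements of `𝔖₁(F)`. -/
def U1 (F : Set ℤ) : Set (𝕋 → ℂ) :=
  {t | IsTrigPoly1 t ∧ ∃ s : ℕ → (𝕋 → ℂ), (∀ n, s n ∈ S1 F) ∧ TendstoUniformly s t atTop}

/-- `𝔘₂(F)` : trigonometric polynomials that are uniform limits of elements of `𝔖₂(F)`. -/
def U2 (F : Set (ℤ × ℤ)) : Set (𝕋 × 𝕋 → ℂ) :=
  {t | IsTrigPoly2 t ∧ ∃ s : ℕ → (𝕋 × 𝕋 → ℂ), (∀ n, s n ∈ S2 F) ∧ TendstoUniformly s t atTop}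

/-- The difference set `F − F`. -/
def diffSet {G : Type*} [Sub G] (F : Set G) : Set G := {x | ∃ u ∈ F, ∃ v ∈ F, x = u - v}

/-- `F ⊆ ℤ²` has Property A if `𝔘₂(F) = 𝔗₂⁺(F − F)`. -/
def PropertyA (F : Set (ℤ × ℤ)) : Prop :=
  U2 F = {t | IsTrigPoly2 t ∧ freq2 t ⊆ diffSet F ∧ ∀ p, ∃ r : ℝ, 0 ≤ r ∧ t p = (r : ℂ)}

lemma coef_fourier (n j : ℤ) :
    fourierCoeff (fun x : 𝕋 => (fourier n x : ℂ)) j = if n = j then 1 else 0 := by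
  have h := (orthonormal_iff_ite.mp (orthonormal_fourier (T := (1 : ℝ)))) j n
  rw [ContinuousMap.inner_toLp] at h
  unfold fourierCoeff
  rw [show (if n = j then (1 : ℂ) else 0) = if j = n then 1 else 0 by simp [eq_comm], ← h]
  congr 1
  ext x
  simp [fourier_neg, mul_comm]

lemma cont_int (f : 𝕋 → ℂ) (hf : Continuous f) : Integrable f AddCircle.haarAddCircle :=
  hf.integrable_of_hasCompactSupport (HasCompactSupport.of_compactSpace f)

lemma coef_sum {ι : Type*} (s : Finset ι) (a : ι → ℂ) (n : ι → ℤ) (j : ℤ) :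
    fourierCoeff (fun x : 𝕋 => ∑ i ∈ s, a i * fourier (n i) x) j
      = ∑ i ∈ s, a i * if n i = j then 1 else 0 := by
  simp_rw [← coef_fourier]
  unfold fourierCoeff
  simp_rw [Finset.smul_sum]
  rw [integral_finsetSum]
  · refine Finset.sum_congr rfl fun i _ => ?_
    rw [← integral_const_mul]
    congr 1
    ext x
    simp only [smul_eq_mul]
    ring
  · intro i _
    apply cont_int
    simp only [smul_eq_mul]
    fun_prop

lemma coef2_sum {ι : Type*} (s : Finset ι) (a : ι → ℂ) (n m : ι → ℤ) (jk : ℤ × ℤ) :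
    coeff2 (fun q => ∑ i ∈ s, a i * fourier (n i) q.1 * fourier (m i) q.2) jk
      = ∑ i ∈ s, a i * (if n i = jk.1 then 1 else 0) * (if m i = jk.2 then 1 else 0) := by
  unfold coeff2
  have inner : ∀ x : 𝕋, (∫ y : 𝕋, (∑ i ∈ s, a i * fourier (n i) x * fourier (m i) y)
      * fourier (-jk.1) x * fourier (-jk.2) y ∂AddCircle.haarAddCircle)
      = fourier (-jk.1) x * ∑ i ∈ s, (a i * if m i = jk.2 then 1 else 0) * fourier (n i) x := by
    intro x
    have := coef_sum s (fun i => a i * fourier (n i) x) m jk.2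
    unfold fourierCoeff at this
    rw [show (∑ i ∈ s, (a i * if m i = jk.2 then 1 else 0) * fourier (n i) x)
      = ∑ i ∈ s, a i * fourier (n i) x * (if m i = jk.2 then 1 else 0) from
      Finset.sum_congr rfl fun i _ => by ring, ← this, ← integral_const_mul]
    congr 1
    ext y
    simp only [smul_eq_mul]
    ring
  simp only [inner]
  have := coef_sum s (fun i => a i * if m i = jk.2 then 1 else 0) n jk.1
  unfold fourierCoeff at this
  simp only [smul_eq_mul] at this
  rw [this]
  exact Finset.sum_congr rfl fun i _ => by ring

lemma theta_sum {ι : Type*} (α : ℝ) (s : Finset ι) (a : ι → ℂ) (n : ι → ℤ) :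
    Theta α (fun x : 𝕋 => ∑ i ∈ s, a i * fourier (n i) x)
      = fun q => ∑ i ∈ s, a i * fourier (n i) q.1 * fourier (thetaA α (n i)) q.2 := by
  funext q
  unfold Theta
  simp only [coef_sum]
  apply HasSum.tsum_eq
  simp only [Finset.sum_mul]
  apply hasSum_sum
  intro i _
  convert hasSum_ite_eq (n i) (a i * fourier (n i) q.1 * fourier (thetaA α (n i)) q.2) using 2 with j
  by_cases h : n i = j
  · subst h; simp
  · simp [h, Ne.symm h]

lemma trig1 {ι : Type*} (s : Finset ι) (a : ι → ℂ) (n : ι → ℤ) :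
    IsTrigPoly1 (fun x : 𝕋 => ∑ i ∈ s, a i * fourier (n i) x) := by
  refine ⟨∑ i ∈ s, Finsupp.single (n i) (a i), ?_⟩
  funext x
  have := Finsupp.sum_finsetSum_index (s := s) (g := fun i => Finsupp.single (n i) (a i))
    (h := fun j (c : ℂ) => c * (fourier j x : ℂ)) (by simp) (by intros; ring)
  simp only [Finsupp.sum_single_index, zero_mul] at this
  exact this

lemma trig2 {ι : Type*} (s : Finset ι) (a : ι → ℂ) (n m : ι → ℤ) :
    IsTrigPoly2 (fun q => ∑ i ∈ s, a i * fourier (n i) q.1 * fourier (m i) q.2) := by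
  refine ⟨∑ i ∈ s, Finsupp.single (n i, m i) (a i), ?_⟩
  funext x
  have := Finsupp.sum_finsetSum_index (s := s) (g := fun i => Finsupp.single (n i, m i) (a i))
    (h := fun j (c : ℂ) => c * (fourier j.1 x.1 : ℂ) * (fourier j.2 x.2 : ℂ))
    (by simp) (by intros; ring)
  simp only [Finsupp.sum_single_index, zero_mul] at this
  exact this

lemma mem_T1 {ι : Type*} (F : Set ℤ) (s : Finset ι) (a : ι → ℂ) (n : ι → ℤ)
    (h : ∀ i ∈ s, n i ∈ F) : (fun x : 𝕋 => ∑ i ∈ s, a i * fourier (n i) x) ∈ T1 F := by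
  refine ⟨trig1 s a n, ?_⟩
  intro j hj
  simp only [freq1, Set.mem_setOf_eq, coef_sum] at hj
  obtain ⟨i, hi, h'⟩ := Finset.exists_ne_zero_of_sum_ne_zero hj
  by_cases e : n i = j
  · exact e ▸ h i hi
  · simp [e] at h'

lemma mem_T2 {ι : Type*} (F : Set (ℤ × ℤ)) (s : Finset ι) (a : ι → ℂ) (n m : ι → ℤ)
    (h : ∀ i ∈ s, (n i, m i) ∈ F) :
    (fun q : 𝕋 × 𝕋 => ∑ i ∈ s, a i * fourier (n i) q.1 * fourier (m i) q.2) ∈ T2 F := by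
  refine ⟨trig2 s a n m, ?_⟩
  intro j hj
  simp only [freq2, Set.mem_setOf_eq, coef2_sum] at hj
  obtain ⟨i, hi, h'⟩ := Finset.exists_ne_zero_of_sum_ne_zero hj
  by_cases e : n i = j.1
  · by_cases e2 : m i = j.2
    · have := h i hi
      rw [e, e2] at this
      exact this
    · simp [e2] at h'
  · simp [e] at h'

lemma of_T1 {F : Set ℤ} {p : 𝕋 → ℂ} (hp : p ∈ T1 F) :
    ∃ c : ℤ →₀ ℂ, (∀ i ∈ c.support, i ∈ F) ∧ p = fun x => ∑ j ∈ c.support, c j * fourier j x := by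
  obtain ⟨⟨c, rfl⟩, h⟩ := hp
  refine ⟨c, fun i hi => h ?_, rfl⟩
  simp only [freq1, Set.mem_setOf_eq]
  rw [coef_sum c.support c (fun j => j) i]
  simpa using hi

lemma of_T2 {F : Set (ℤ × ℤ)} {p : 𝕋 × 𝕋 → ℂ} (hp : p ∈ T2 F) :
    ∃ c : (ℤ × ℤ) →₀ ℂ, (∀ i ∈ c.support, i ∈ F) ∧
      p = fun q => ∑ j ∈ c.support, c j * fourier j.1 q.1 * fourier j.2 q.2 := by
  obtain ⟨⟨c, rfl⟩, h⟩ := hp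
  refine ⟨c, fun i hi => h ?_, rfl⟩
  simp only [freq2, Set.mem_setOf_eq]
  rw [coef2_sum c.support c (fun j => j.1) (fun j => j.2) i, Finset.sum_eq_single i]
  · simpa using hi
  · intro b _ hb
    by_cases e : b.1 = i.1
    · by_cases e2 : b.2 = i.2
      · exact absurd (Prod.ext e e2) hb
      · simp [e2]
    · simp [e]
  · intro h; exact absurd hi h

lemma theta_unique (α : ℝ) (j k : ℤ) (h : |(k : ℝ) - j * α| < 1 / 2) : thetaA α j = k := by
  unfold thetaA
  rw [Int.ceil_eq_iff]
  rw [abs_lt] at h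
  constructor <;> linarith [h.1, h.2]

lemma theta_sq (α β : ℝ) (hβ : β ≤ 1 / 4) (p : 𝕋 → ℂ) (hp : p ∈ T1 (F1set α β)) :
    Theta α (fun x => p x * (starRingEnd ℂ) (p x)) =
        fun q => Theta α p q * (starRingEnd ℂ) (Theta α p q) := by
  obtain ⟨c, hc, rfl⟩ := of_T1 hp
  rw [theta_sum α c.support c (fun j => j)]
  have h1 : (fun x : 𝕋 => (∑ j ∈ c.support, c j * (fourier j x : ℂ)) *
      (starRingEnd ℂ) (∑ j ∈ c.support, c j * (fourier j x : ℂ)))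
      = fun x : 𝕋 => ∑ i ∈ c.support ×ˢ c.support,
        (c i.1 * (starRingEnd ℂ) (c i.2)) * (fourier (i.1 - i.2) x : ℂ) := by
    funext x
    rw [map_sum, Finset.sum_mul_sum, Finset.sum_product]
    refine Finset.sum_congr rfl fun i _ => Finset.sum_congr rfl fun j _ => ?_
    rw [map_mul, sub_eq_add_neg, fourier_add, fourier_neg]
    ring
  rw [h1, theta_sum α _ _ (fun i : ℤ × ℤ => i.1 - i.2)]
  funext q
  rw [map_sum, Finset.sum_mul_sum, Finset.sum_product]
  refine Finset.sum_congr rfl fun i hi => Finset.sum_congr rfl fun j hj => ?_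
  have ht : thetaA α (i - j) = thetaA α i - thetaA α j := by
    have a1 := hc i hi
    have a2 := hc j hj
    simp only [F1set, Set.mem_setOf_eq, abs_lt] at a1 a2
    apply theta_unique
    push_cast
    rw [abs_lt]
    constructor <;> linarith [a1.1, a1.2, a2.1, a2.2]
  simp only [ht]
  simp only [map_mul, sub_eq_add_neg, fourier_add, fourier_neg]
  ring

/-- For `0 < β ≤ 1/4`, `Θ_α(|p|²) = |Θ_α(p)|²` for `p ∈ 𝔗₁(F₁(α,β))`, and consequently
`Θ_α` maps `𝔖₁(F₁(α,β))` onto `𝔖₂(F₂(α,β))`. -/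
theorem statement8 (α β : ℝ) (hβ0 : 0 < β) (hβ : β ≤ 1 / 4) :
    (∀ p ∈ T1 (F1set α β),
      Theta α (fun x => p x * (starRingEnd ℂ) (p x)) =
        fun q => Theta α p q * (starRingEnd ℂ) (Theta α p q)) ∧
    Theta α '' S1 (F1set α β) = S2 (F2set α β) := by
  refine ⟨theta_sq α β hβ, ?_⟩
  ext f
  constructor
  · rintro ⟨_, ⟨p, hp, rfl⟩, rfl⟩
    refine ⟨Theta α p, ?_, theta_sq α β hβ p hp⟩
    obtain ⟨c, hc, rfl⟩ := of_T1 hp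
    rw [theta_sum α c.support c (fun j => j)]
    exact mem_T2 _ _ _ _ _ fun i hi => hc i hi
  · rintro ⟨q, hq, rfl⟩
    obtain ⟨c, hc, rfl⟩ := of_T2 hq
    have hth : ∀ i ∈ c.support, thetaA α i.1 = i.2 := by
      intro i hi
      have := hc i hi
      simp only [F2set, Set.mem_setOf_eq] at this
      exact theta_unique _ _ _ (by linarith)
    have hp := mem_T1 (F1set α β) c.support c (fun i => i.1) (by
      intro i hi
      have := hc i hi
      simp only [F2set, Set.mem_setOf_eq] at this
      simpa only [F1set, Set.mem_setOf_eq, hth i hi] using this)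
    refine ⟨_, ⟨_, hp, rfl⟩, ?_⟩
    rw [theta_sq α β hβ _ hp, theta_sum α c.support c (fun i => i.1)]
    have : (fun q : 𝕋 × 𝕋 => ∑ i ∈ c.support,
        c i * (fourier i.1 q.1 : ℂ) * (fourier (thetaA α i.1) q.2 : ℂ))
        = fun q => ∑ i ∈ c.support, c i * (fourier i.1 q.1 : ℂ) * (fourier i.2 q.2 : ℂ) := by
      funext q
      exact Finset.sum_congr rfl fun i hi => by rw [hth i hi]
    rw [this]
end
end

section
/- If α ∈ ℚ then for every β > 0 the set F₂(α,β) = {(j,k) ∈ ℤ² : |k − jα| < β} has Property A; that is, every nonnegative trigonometric polynomial on 𝕋² with frequencies in F₂(α,β) − F₂(α,β) is a uniform limit of functions |q|² with q a trigonometric polynomial with frequencies in F₂(α,β). -/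
open Complex MeasureTheory Real Filter

noncomputable section

abbrev TT := 𝕋 × 𝕋

/-- The character of `𝕋²` with frequency `u`. -/
def chi (u : ℤ × ℤ) : C(TT, ℂ) :=
  ((fourier u.1 : C(𝕋, ℂ)).comp ContinuousMap.fst) * ((fourier u.2 : C(𝕋, ℂ)).comp ContinuousMap.snd)

lemma chi_apply (u : ℤ × ℤ) (p : TT) : chi u p = fourier u.1 p.1 * fourier u.2 p.2 := rfl

lemma chi_zero : chi 0 = 1 := by
  ext p; rw [chi_apply]; simp

lemma chi_add (u v : ℤ × ℤ) : chi (u + v) = chi u * chi v := by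
  ext p
  rw [ContinuousMap.mul_apply, chi_apply, chi_apply, chi_apply, Prod.fst_add, Prod.snd_add,
    fourier_add, fourier_add]
  ring

lemma chi_neg (u : ℤ × ℤ) : chi (-u) = star (chi u) := by
  ext p
  rw [ContinuousMap.star_apply, chi_apply, chi_apply, Prod.fst_neg, Prod.snd_neg,
    fourier_neg, fourier_neg, star_mul', RCLike.star_def]

/-- Span of the characters with frequencies in `F`. -/
def VV (F : Set (ℤ × ℤ)) : Submodule ℂ C(TT, ℂ) := Submodule.span ℂ (chi '' F)

lemma chi_mem {F : Set (ℤ × ℤ)} {u : ℤ × ℤ} (h : u ∈ F) : chi u ∈ VV F :=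
  Submodule.subset_span ⟨u, h, rfl⟩

lemma VV_mono {F G : Set (ℤ × ℤ)} (h : F ⊆ G) : VV F ≤ VV G :=
  Submodule.span_mono (Set.image_mono h)

lemma VV_mul {F G H : Set (ℤ × ℤ)} (h : ∀ u ∈ F, ∀ v ∈ G, u + v ∈ H) {f g : C(TT, ℂ)}
    (hf : f ∈ VV F) (hg : g ∈ VV G) : f * g ∈ VV H := by
  have h1 : f * g ∈ VV F * VV G := Submodule.mul_mem_mul hf hg
  rw [VV, VV, Submodule.span_mul_span] at h1
  refine Submodule.span_le.2 ?_ h1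
  rintro _ ⟨_, ⟨u, hu, rfl⟩, _, ⟨v, hv, rfl⟩, rfl⟩
  simp only []
  rw [← chi_add]
  exact chi_mem (h u hu v hv)

lemma VV_star {F G : Set (ℤ × ℤ)} (h : ∀ u ∈ F, -u ∈ G) {f : C(TT, ℂ)}
    (hf : f ∈ VV F) : star f ∈ VV G := by
  induction hf using Submodule.span_induction with
  | mem x hx =>
    obtain ⟨u, hu, rfl⟩ := hx
    rw [← chi_neg]; exact chi_mem (h u hu)
  | zero => simp
  | add x y _ _ hx hy => rw [star_add]; exact add_mem hx hy
  | smul c x _ hx => rw [star_smul]; exact Submodule.smul_mem _ _ hx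

lemma VV_split (F G : Set (ℤ × ℤ)) {f : C(TT, ℂ)} (hf : f ∈ VV F) :
    ∃ g ∈ VV (F ∩ G), ∃ h ∈ VV (F \ G), f = g + h := by
  have : VV F = VV (F ∩ G) ⊔ VV (F \ G) := by
    rw [VV, VV, VV, ← Submodule.span_union, ← Set.image_union, Set.inter_union_sdiff]
  rw [this, Submodule.mem_sup] at hf
  obtain ⟨g, hg, h, hh, rfl⟩ := hf
  exact ⟨g, hg, h, hh, rfl⟩

lemma VV_iff_finsupp {F : Set (ℤ × ℤ)} {f : C(TT, ℂ)} :
    f ∈ VV F ↔ ∃ c : (ℤ × ℤ) →₀ ℂ, (c.support : Set (ℤ × ℤ)) ⊆ F ∧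
      (f : TT → ℂ) = fun p => ∑ jk ∈ c.support, c jk * fourier jk.1 p.1 * fourier jk.2 p.2 := by
  rw [VV, Finsupp.mem_span_image_iff_linearCombination]
  have key : ∀ c : (ℤ × ℤ) →₀ ℂ, (Finsupp.linearCombination ℂ chi c : TT → ℂ) =
      fun p => ∑ jk ∈ c.support, c jk * fourier jk.1 p.1 * fourier jk.2 p.2 := by
    intro c
    funext p
    rw [Finsupp.linearCombination_apply, Finsupp.sum, ContinuousMap.coe_sum, Finset.sum_apply]
    refine Finset.sum_congr rfl fun u _ => ?_
    rw [ContinuousMap.smul_apply, chi_apply, smul_eq_mul, mul_assoc]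
  constructor
  · rintro ⟨c, hc, rfl⟩
    exact ⟨c, (Finsupp.mem_supported _ _).1 hc, key c⟩
  · rintro ⟨c, hc, h⟩
    refine ⟨c, (Finsupp.mem_supported _ _).2 hc, ?_⟩
    apply DFunLike.coe_injective
    rw [key, h]

lemma isTrig_iff {t : TT → ℂ} : IsTrigPoly2 t ↔ ∃ f ∈ VV Set.univ, t = (f : TT → ℂ) := by
  constructor
  · rintro ⟨c, hc⟩
    refine ⟨⟨t, ?_⟩, VV_iff_finsupp.2 ⟨c, Set.subset_univ _, hc⟩, rfl⟩
    rw [hc]; fun_prop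
  · rintro ⟨f, hf, rfl⟩
    obtain ⟨c, -, h⟩ := VV_iff_finsupp.1 hf
    exact ⟨c, h⟩

abbrev hm : Measure 𝕋 := AddCircle.haarAddCircle

lemma integrable_cont {E : Type*} [NormedAddCommGroup E] [SecondCountableTopology E]
    {f : 𝕋 → E} (hf : Continuous f) : Integrable f hm :=
  hf.integrable_of_hasCompactSupport (HasCompactSupport.of_compactSpace f)

lemma int_fourier (n : ℤ) : ∫ x : 𝕋, fourier n x ∂hm = if n = 0 then 1 else 0 := by
  have h := fourierCoeff_fourier (T := (1:ℝ)) n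
  have h2 := congrFun h 0
  rw [fourierCoeff] at h2
  simp only [neg_zero, fourier_zero, one_smul] at h2
  rw [h2, Pi.single_apply]
  simp [eq_comm]

lemma int_fourier' (n m : ℤ) : ∫ x : 𝕋, fourier n x * fourier (-m) x ∂hm = if n = m then 1 else 0 := by
  simp_rw [← fourier_add]
  rw [int_fourier]
  simp only [← sub_eq_add_neg, sub_eq_zero]

lemma coeff_finsupp (c : (ℤ × ℤ) →₀ ℂ) (u : ℤ × ℤ) :
    coeff2 (fun p => ∑ jk ∈ c.support, c jk * fourier jk.1 p.1 * fourier jk.2 p.2) u = c u := by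
  unfold coeff2
  have inner : ∀ x : 𝕋, (∫ y : 𝕋, (∑ jk ∈ c.support, c jk * fourier jk.1 x * fourier jk.2 y)
      * fourier (-u.1) x * fourier (-u.2) y ∂hm) =
      ∑ jk ∈ c.support, (c jk * if jk.2 = u.2 then 1 else 0) *
        (fourier jk.1 x * fourier (-u.1) x) := by
    intro x
    have : ∀ y : 𝕋, (∑ jk ∈ c.support, c jk * fourier jk.1 x * fourier jk.2 y)
      * fourier (-u.1) x * fourier (-u.2) y = ∑ jk ∈ c.support,
        (c jk * fourier jk.1 x * fourier (-u.1) x) * (fourier jk.2 y * fourier (-u.2) y) := by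
      intro y
      rw [Finset.sum_mul, Finset.sum_mul]
      exact Finset.sum_congr rfl fun _ _ => by ring
    simp_rw [this]
    rw [integral_finsetSum _ (fun i _ => integrable_cont (by fun_prop))]
    refine Finset.sum_congr rfl fun i _ => ?_
    rw [integral_const_mul, int_fourier']
    ring
  simp_rw [inner]
  rw [integral_finsetSum _ (fun i _ => integrable_cont (by fun_prop))]
  have : ∀ i ∈ c.support, ∫ x : 𝕋, (c i * if i.2 = u.2 then 1 else 0) *
        (fourier i.1 x * fourier (-u.1) x) ∂hm = if i = u then c i else 0 := by
    intro i _
    rw [integral_const_mul, int_fourier']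
    rcases i with ⟨i1, i2⟩; rcases u with ⟨u1, u2⟩
    simp only [Prod.mk.injEq]
    by_cases h1 : i1 = u1 <;> by_cases h2 : i2 = u2 <;> simp [h1, h2]
  rw [Finset.sum_congr rfl this, Finset.sum_ite_eq']
  simp only [Finsupp.mem_support_iff, ne_eq, ite_not]
  split_ifs with h
  · exact h.symm
  · rfl

lemma T2_iff {F : Set (ℤ × ℤ)} {t : TT → ℂ} : t ∈ T2 F ↔ ∃ f ∈ VV F, t = (f : TT → ℂ) := by
  constructor
  · rintro ⟨⟨c, hc⟩, h2⟩
    refine ⟨⟨t, ?_⟩, VV_iff_finsupp.2 ⟨c, ?_, hc⟩, rfl⟩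
    · rw [hc]; fun_prop
    · intro u hu
      apply h2
      rw [freq2, Set.mem_ofPred_eq, hc, coeff_finsupp]
      simpa using hu
  · rintro ⟨f, hf, rfl⟩
    obtain ⟨c, hc, h⟩ := VV_iff_finsupp.1 hf
    refine ⟨⟨c, h⟩, ?_⟩
    intro u hu
    rw [freq2, Set.mem_ofPred_eq, h, coeff_finsupp] at hu
    exact hc (by simpa using hu)

lemma norm_fourier_apply (n : ℤ) (x : 𝕋) : ‖(fourier n x : ℂ)‖ = 1 := by
  rw [fourier_apply]; exact Circle.norm_coe _

lemma coeff_bound {t : TT → ℂ} {e : ℝ} (h : ∀ p, ‖t p‖ ≤ e) (u : ℤ × ℤ) : ‖coeff2 t u‖ ≤ e := by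
  unfold coeff2
  refine (norm_integral_le_of_norm_le_const (C := e) (ae_of_all _ fun x => ?_)).trans (by simp)
  refine (norm_integral_le_of_norm_le_const (C := e) (ae_of_all _ fun y => ?_)).trans (by simp)
  rw [norm_mul, norm_mul, norm_fourier_apply, norm_fourier_apply, mul_one, mul_one]
  exact h _

/-- easy direction -/
lemma easy_dir {F : Set (ℤ × ℤ)} {t : TT → ℂ} (ht : t ∈ U2 F) :
    IsTrigPoly2 t ∧ freq2 t ⊆ diffSet F ∧ ∀ p, ∃ r : ℝ, 0 ≤ r ∧ t p = (r : ℂ) := by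
  obtain ⟨h1, s, hs, hlim⟩ := ht
  refine ⟨h1, ?_, ?_⟩
  · have hsV : ∀ n, ∃ f ∈ VV (diffSet F), s n = (f : TT → ℂ) := by
      intro n
      obtain ⟨q, hq, hs⟩ := hs n
      obtain ⟨f, hf, rfl⟩ := T2_iff.1 hq
      refine ⟨f * star f, VV_mul (G := -F) ?_ hf (VV_star (fun u hu => by simpa using hu) hf), ?_⟩
      · intro u hu v hv
        exact ⟨u, hu, -v, hv, by simp⟩
      · rw [hs]; rfl
    obtain ⟨g, hg, rfl⟩ := isTrig_iff.1 h1
    by_contra hcon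
    obtain ⟨u, hu, hu'⟩ := Set.not_subset.1 hcon
    obtain ⟨c, -, hc⟩ := VV_iff_finsupp.1 hg
    have hcu : coeff2 g u = c u := by rw [hc, coeff_finsupp]
    have hpos : 0 < ‖coeff2 g u‖ := norm_pos_iff.2 hu
    rw [Metric.tendstoUniformly_iff] at hlim
    obtain ⟨n, hn⟩ := (hlim (‖coeff2 g u‖ / 2) (by positivity)).exists
    obtain ⟨f, hf, hsf⟩ := hsV n
    obtain ⟨d, hd, hd'⟩ := VV_iff_finsupp.1 hf
    have hb : ‖coeff2 (g - f : C(TT, ℂ)) u‖ ≤ ‖coeff2 g u‖ / 2 := by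
      refine coeff_bound (fun p => ?_) u
      have := hn p
      rw [hsf, dist_eq_norm] at this
      exact this.le
    have hlin : coeff2 (g - f : C(TT, ℂ)) u = c u - d u := by
      have : ((g - f : C(TT, ℂ)) : TT → ℂ) = fun p => ∑ jk ∈ (c - d).support,
          (c - d) jk * fourier jk.1 p.1 * fourier jk.2 p.2 := by
        funext p
        rw [ContinuousMap.sub_apply, hc, hd']
        have := Finsupp.sum_sub_index (f := c) (g := d)
          (h := fun (jk : ℤ × ℤ) (z : ℂ) => z * fourier jk.1 p.1 * fourier jk.2 p.2)
          (fun a b1 b2 => by ring)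
        exact this.symm
      rw [this, coeff_finsupp]; rfl
    have hdu : d u = 0 := by
      by_contra h
      exact hu' (hd (by simpa using h))
    rw [hlin, hdu, sub_zero, hcu] at hb
    rw [hcu] at hpos
    linarith
  · intro p
    have hcl : IsClosed {z : ℂ | ∃ r : ℝ, 0 ≤ r ∧ z = (r : ℂ)} := by
      have : {z : ℂ | ∃ r : ℝ, 0 ≤ r ∧ z = (r : ℂ)} = {z : ℂ | 0 ≤ z.re ∧ z.im = 0} := by
        ext z
        constructor
        · rintro ⟨r, hr, rfl⟩; simpa using hr
        · rintro ⟨h1, h2⟩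
          exact ⟨z.re, h1, Complex.ext (by simp) (by simpa using h2)⟩
      rw [this]
      exact (isClosed_le continuous_const Complex.continuous_re).inter
        (isClosed_eq Complex.continuous_im continuous_const)
    refine hcl.mem_of_tendsto (hlim.tendsto_at p) (Eventually.of_forall fun n => ?_)
    obtain ⟨q, -, hq⟩ := hs n
    refine ⟨Complex.normSq (q p), Complex.normSq_nonneg _, ?_⟩
    rw [hq]; exact Complex.mul_conj _

lemma VV_dense (g : C(TT, ℂ)) {e : ℝ} (he : 0 < e) : ∃ L ∈ VV Set.univ, ‖g - L‖ < e := by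
  let A : StarSubalgebra ℂ C(TT, ℂ) :=
    { carrier := VV Set.univ
      mul_mem' := fun hf hg => VV_mul (fun _ _ _ _ => Set.mem_univ _) hf hg
      one_mem' := by rw [← chi_zero]; exact chi_mem (Set.mem_univ _)
      add_mem' := fun hf hg => add_mem hf hg
      zero_mem' := zero_mem _
      algebraMap_mem' := fun r => by
        rw [Algebra.algebraMap_eq_smul_one, ← chi_zero]
        exact Submodule.smul_mem _ _ (chi_mem (Set.mem_univ _))
      star_mem' := fun hf => VV_star (fun _ _ => Set.mem_univ _) hf }
  have hA : A.SeparatesPoints := by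
    intro x y hxy
    by_cases h1 : x.1 = y.1
    · have h2 : x.2 ≠ y.2 := fun h => hxy (Prod.ext h1 h)
      refine ⟨_, ⟨chi (0, 1), chi_mem (Set.mem_univ _), rfl⟩, ?_⟩
      dsimp only
      rw [chi_apply, chi_apply]
      simp only [fourier_zero, one_mul]
      rw [fourier_one, fourier_one]
      intro h
      exact h2 (AddCircle.injective_toCircle one_ne_zero (Circle.coe_injective h))
    · refine ⟨_, ⟨chi (1, 0), chi_mem (Set.mem_univ _), rfl⟩, ?_⟩
      dsimp only
      rw [chi_apply, chi_apply]
      simp only [fourier_zero, mul_one]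
      rw [fourier_one, fourier_one]
      intro h
      exact h1 (AddCircle.injective_toCircle one_ne_zero (Circle.coe_injective h))
  have h := ContinuousMap.starSubalgebra_topologicalClosure_eq_top_of_separatesPoints A hA
  have hg : g ∈ A.topologicalClosure := by rw [h]; trivial
  have hg' : g ∈ closure (A : Set C(TT, ℂ)) := hg
  rw [Metric.mem_closure_iff] at hg'
  obtain ⟨L, hL, hd⟩ := hg' e he
  exact ⟨L, hL, by rwa [dist_eq_norm] at hd⟩

/-- The grading. -/
def ph (a b : ℤ) (u : ℤ × ℤ) : ℤ := b * u.2 - a * u.1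

lemma ph_add (a b : ℤ) (u v : ℤ × ℤ) : ph a b (u + v) = ph a b u + ph a b v := by
  simp [ph]; ring

lemma ph_neg (a b : ℤ) (u : ℤ × ℤ) : ph a b (-u) = -ph a b u := by
  simp [ph]; ring

lemma exp_approx (a b : ℤ) {L : C(TT, ℂ)} (hL : L ∈ VV {u | 0 ≤ ph a b u}) {e : ℝ} (he : 0 < e) :
    ∃ Q ∈ VV {u | 0 ≤ ph a b u}, ∀ p, ‖Complex.exp (L p) - Q p‖ < e := by
  let A : Subalgebra ℂ C(TT, ℂ) :=
    { carrier := VV {u | 0 ≤ ph a b u}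
      mul_mem' := fun hf hg => VV_mul (fun u hu v hv => by
        have h1 : 0 ≤ ph a b u := hu
        have h2 : 0 ≤ ph a b v := hv
        change 0 ≤ ph a b (u + v)
        rw [ph_add]; omega) hf hg
      add_mem' := fun hf hg => add_mem hf hg
      algebraMap_mem' := fun r => by
        rw [Algebra.algebraMap_eq_smul_one, ← chi_zero]
        exact Submodule.smul_mem _ _ (chi_mem (by simp [ph])) }
  have h1 : L ∈ A.topologicalClosure := A.le_topologicalClosure hL
  have h2 : NormedSpace.exp L ∈ A.topologicalClosure :=
    NormedSpace.exp_mem (R := ℂ) A.isClosed_topologicalClosure h1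
  have h3 : NormedSpace.exp L ∈ closure (A : Set C(TT, ℂ)) := h2
  rw [Metric.mem_closure_iff] at h3
  obtain ⟨Q, hQ, hd⟩ := h3 e he
  refine ⟨Q, hQ, fun p => ?_⟩
  have : (NormedSpace.exp L) p = Complex.exp (L p) := by
    rw [NormedSpace.exp_continuousMap_eq, Complex.exp_eq_exp_ℂ]; rfl
  rw [← this, ← dist_eq_norm]
  exact (ContinuousMap.dist_apply_le_dist p).trans_lt hd

/-- The orbit of `p` under the one-parameter subgroup. -/
def orb (a b : ℤ) (p : TT) (s : 𝕋) : TT := (p.1 - a • s, p.2 + b • s)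

lemma orb_cont (a b : ℤ) (p : TT) : Continuous (orb a b p) := by
  unfold orb; fun_prop

lemma chi_orb (a b : ℤ) (p : TT) (s : 𝕋) (u : ℤ × ℤ) :
    chi u (orb a b p s) = chi u p * fourier (ph a b u) s := by
  rw [chi_apply, chi_apply, orb]
  simp only [fourier_apply, ph]
  rw [← Circle.coe_mul, ← Circle.coe_mul, ← Circle.coe_mul, ← AddCircle.toCircle_add,
    ← AddCircle.toCircle_add, ← AddCircle.toCircle_add]
  congr 2
  rw [smul_sub, smul_add, sub_smul, smul_smul, smul_smul, mul_comm b, mul_comm a]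
  abel

lemma avg_zero (a b : ℤ) {S : Set (ℤ × ℤ)} (hS : ∀ u ∈ S, ph a b u ≠ 0) {f : C(TT, ℂ)}
    (hf : f ∈ VV S) (p : TT) : ∫ s, f (orb a b p s) ∂hm = 0 := by
  have hc := orb_cont a b p
  induction hf using Submodule.span_induction with
  | mem x hx =>
    obtain ⟨u, hu, rfl⟩ := hx
    simp_rw [chi_orb]
    rw [integral_const_mul, int_fourier, if_neg (hS u hu), mul_zero]
  | zero => simp
  | add x y _ _ hx hy =>
    simp only [ContinuousMap.add_apply]
    rw [integral_add (integrable_cont (by fun_prop)) (integrable_cont (by fun_prop)), hx, hy, add_zero]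
  | smul c x _ hx =>
    simp only [ContinuousMap.smul_apply]
    rw [integral_smul, hx, smul_zero]

lemma repro (a b : ℤ) (N : ℕ) {f : C(TT, ℂ)}
    (hf : f ∈ VV {u | |ph a b u| ≤ N}) (p : TT) :
    ∫ s, f (orb a b p s) * (∑ m ∈ Finset.Icc (-N : ℤ) N, fourier (-m) s) ∂hm = f p := by
  have hc := orb_cont a b p
  induction hf using Submodule.span_induction with
  | mem x hx =>
    obtain ⟨u, hu, rfl⟩ := hx
    have hu' : |ph a b u| ≤ N := hu
    simp_rw [chi_orb, Finset.mul_sum, mul_assoc]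
    rw [integral_finsetSum _ (fun i _ => integrable_cont (by fun_prop))]
    simp_rw [integral_const_mul, int_fourier']
    rw [← Finset.mul_sum, Finset.sum_ite_eq, if_pos, mul_one]
    rw [abs_le] at hu'
    exact Finset.mem_Icc.2 hu'
  | zero => simp
  | add x y _ _ hx hy =>
    simp only [ContinuousMap.add_apply, add_mul]
    rw [integral_add (integrable_cont (by fun_prop)) (integrable_cont (by fun_prop)), hx, hy]
  | smul c x _ hx =>
    simp only [ContinuousMap.smul_apply, smul_mul_assoc]
    rw [integral_smul, hx]

lemma sup_le_avg (a b : ℤ) (N : ℕ) {f : C(TT, ℂ)}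
    (hf : f ∈ VV {u | |ph a b u| ≤ N}) (p : TT) :
    ‖f p‖ ≤ (2 * N + 1) * ∫ s, ‖f (orb a b p s)‖ ∂hm := by
  have hc := orb_cont a b p
  rw [← repro a b N hf p, ← integral_const_mul]
  refine (norm_integral_le_integral_norm _).trans ?_
  refine integral_mono (integrable_cont (by fun_prop)) (integrable_cont (by fun_prop)) fun s => ?_
  simp only [norm_mul]
  rw [mul_comm]
  refine mul_le_mul_of_nonneg_right ?_ (norm_nonneg _)
  refine (norm_sum_le _ _).trans ?_
  simp_rw [norm_fourier_apply]
  rw [Finset.sum_const, Int.card_Icc, nsmul_eq_mul, mul_one]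
  have : ((N : ℤ) + 1 - -(N : ℤ)).toNat = 2 * N + 1 := by omega
  rw [this]; push_cast; exact le_refl _

lemma trunc_aux (P R Q t : ℂ) {C η : ℝ} (hη : 0 < η) (hQ : Q = P + R) (hC : ‖Q‖ ≤ C)
    (h1 : ‖Q * (starRingEnd ℂ) Q - t‖ ≤ η) :
    ‖P * (starRingEnd ℂ) P - t‖ ≤ (C / η + 1) * ‖R‖ ^ 2 + (C * η + η) := by
  have e1 : P * (starRingEnd ℂ) P - t = (Q * (starRingEnd ℂ) Q - t) + (R * (starRingEnd ℂ) R
      - (R * (starRingEnd ℂ) Q + Q * (starRingEnd ℂ) R)) := by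
    rw [hQ, map_add]; ring
  have hC0 : 0 ≤ C := (norm_nonneg _).trans hC
  have e2 : ‖P * (starRingEnd ℂ) P - t‖ ≤ η + (‖R‖ * ‖R‖ + (‖R‖ * C + C * ‖R‖)) := by
    rw [e1]
    refine (norm_add_le _ _).trans (add_le_add h1 ((norm_sub_le _ _).trans (add_le_add ?_
      ((norm_add_le _ _).trans (add_le_add ?_ ?_)))))
    · rw [norm_mul, RCLike.norm_conj]
    · rw [norm_mul, RCLike.norm_conj]; gcongr
    · rw [norm_mul, RCLike.norm_conj]; gcongr
  have e3 : 2 * ‖R‖ ≤ ‖R‖ ^ 2 / η + η := by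
    rw [div_add' _ _ _ hη.ne', le_div_iff₀ hη]
    nlinarith [sq_nonneg (‖R‖ - η)]
  have e4 : C * (2 * ‖R‖) ≤ C * (‖R‖ ^ 2 / η + η) := mul_le_mul_of_nonneg_left e3 hC0
  have e5 : C * (‖R‖ ^ 2 / η + η) = C / η * ‖R‖ ^ 2 + C * η := by ring
  nlinarith

lemma trunc (a b : ℤ) (N : ℕ) {Q W t : C(TT, ℂ)} (hQ : Q ∈ VV {u | 0 ≤ ph a b u})
    (hW : W ∈ VV {u | 0 ≤ ph a b u}) (ht : t ∈ VV {u | |ph a b u| ≤ N}) {C η : ℝ}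
    (hη : 0 < η) (hη1 : η ≤ 1) (hC : ∀ p, ‖Q p‖ ≤ C)
    (h1 : ∀ p, ‖Q p * (starRingEnd ℂ) (Q p) - t p‖ ≤ η)
    (h2 : ∀ p, ‖Q p - t p * (starRingEnd ℂ) (W p)‖ ≤ η) :
    ∃ P ∈ VV {u | 0 ≤ ph a b u ∧ ph a b u ≤ N},
      ∀ p, ‖P p * (starRingEnd ℂ) (P p) - t p‖ ≤ (2 * N + 1) * ((2 * C + 2) * η) := by
  obtain ⟨P, hP, R, hR, hQPR⟩ := VV_split {u | 0 ≤ ph a b u} {u | ph a b u ≤ (N : ℤ)} hQ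
  have hP' : P ∈ VV {u | 0 ≤ ph a b u ∧ ph a b u ≤ N} :=
    by
    refine VV_mono ?_ hP
    intro u hu
    exact ⟨hu.1, hu.2⟩
  have hR' : R ∈ VV {u | (N : ℤ) < ph a b u} := by
    refine VV_mono ?_ hR
    intro u hu
    have h3 : ¬ (ph a b u ≤ (N : ℤ)) := fun h => hu.2 h
    change (N : ℤ) < ph a b u
    omega
  refine ⟨P, hP', fun p => ?_⟩
  have hc := orb_cont a b p
  obtain ⟨D, hD⟩ : ∃ D : C(TT, ℂ), D = P - t * star W := ⟨_, rfl⟩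
  have hDm : D ∈ VV {u | ph a b u ≤ N} := by
    rw [hD]
    refine sub_mem (VV_mono (fun u hu => hu.2) hP')
      (VV_mul (G := {u | ph a b u ≤ 0}) ?_ ht (VV_star ?_ hW))
    · intro u hu v hv
      have h1 : |ph a b u| ≤ N := hu
      have h2 : ph a b v ≤ 0 := hv
      change ph a b (u + v) ≤ N
      rw [ph_add]; rw [abs_le] at h1; omega
    · intro u hu
      have h1 : 0 ≤ ph a b u := hu
      change ph a b (-u) ≤ 0
      rw [ph_neg]; omega
  have hRD : R * star D ∈ VV {u | 0 < ph a b u} := by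
    refine VV_mul (G := {u | -(N : ℤ) ≤ ph a b u}) ?_ hR' (VV_star ?_ hDm)
    · intro u hu v hv
      have h1 : (N : ℤ) < ph a b u := hu
      have h2 : -(N : ℤ) ≤ ph a b v := hv
      change 0 < ph a b (u + v)
      rw [ph_add]; omega
    · intro u hu
      have h1 : ph a b u ≤ N := hu
      change -(N : ℤ) ≤ ph a b (-u)
      rw [ph_neg]; omega
  have hne : ∀ u ∈ {u : ℤ × ℤ | 0 < ph a b u}, ph a b u ≠ 0 := by
    intro u hu
    have h1 : 0 < ph a b u := hu
    omega
  have hz := avg_zero a b hne hRD p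
  have hre : ∫ s, ((R * star D) (orb a b p s)).re ∂hm = 0 := by
    have := Complex.reCLM.integral_comp_comm (μ := hm) (φ := fun s => (R * star D) (orb a b p s))
      (integrable_cont (by fun_prop))
    simp only [Complex.reCLM_apply] at this
    rw [this, hz, Complex.zero_re]
  have hptw : ∀ x, ‖R x‖ ^ 2 + 2 * ((R * star D) x).re ≤ η ^ 2 := by
    intro x
    have e1 : ‖R x + D x‖ ≤ η := by
      have := h2 x
      rw [hQPR] at this
      refine le_trans (le_of_eq ?_) this
      congr 1
      simp only [hD, ContinuousMap.sub_apply, ContinuousMap.add_apply, ContinuousMap.mul_apply,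
        ContinuousMap.star_apply, RCLike.star_def]
      ring
    have e2 : ‖R x + D x‖ ^ 2 ≤ η ^ 2 := by gcongr
    rw [← Complex.normSq_eq_norm_sq, Complex.normSq_add, Complex.normSq_eq_norm_sq,
      Complex.normSq_eq_norm_sq] at e2
    have e3 : (R * star D) x = R x * (starRingEnd ℂ) (D x) := rfl
    rw [e3]
    nlinarith [sq_nonneg ‖D x‖]
  have hR2 : ∫ s, ‖R (orb a b p s)‖ ^ 2 ∂hm ≤ η ^ 2 := by
    have := integral_mono (μ := hm)
      (f := fun s => ‖R (orb a b p s)‖ ^ 2 + 2 * ((R * star D) (orb a b p s)).re)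
      (g := fun s => η ^ 2) (integrable_cont (by fun_prop)) (integrable_cont (by fun_prop))
      (fun s => hptw _)
    rw [integral_add (integrable_cont (by fun_prop)) (integrable_cont (by fun_prop)),
      integral_const_mul, hre] at this
    simpa using this
  have hE : P * star P - t ∈ VV {u | |ph a b u| ≤ N} := by
    refine sub_mem (VV_mul (G := {u | -(N : ℤ) ≤ ph a b u ∧ ph a b u ≤ 0}) ?_ hP' (VV_star ?_ hP')) ht
    · intro u hu v hv
      have h1 : 0 ≤ ph a b u ∧ ph a b u ≤ N := hu
      have h2 : -(N : ℤ) ≤ ph a b v ∧ ph a b v ≤ 0 := hv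
      change |ph a b (u + v)| ≤ N
      rw [ph_add, abs_le]; omega
    · intro u hu
      have h1 : 0 ≤ ph a b u ∧ ph a b u ≤ N := hu
      change -(N : ℤ) ≤ ph a b (-u) ∧ ph a b (-u) ≤ 0
      rw [ph_neg]; omega
  have hC0 : 0 ≤ C := (norm_nonneg _).trans (hC p)
  have hfin := sup_le_avg a b N hE p
  refine hfin.trans (mul_le_mul_of_nonneg_left ?_ (by positivity))
  have hint : ∫ s, ‖(P * star P - t) (orb a b p s)‖ ∂hm ≤
      ∫ s, ((C / η + 1) * ‖R (orb a b p s)‖ ^ 2 + (C * η + η)) ∂hm := by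
    refine integral_mono (integrable_cont (by fun_prop)) (integrable_cont (by fun_prop)) fun s => ?_
    exact trunc_aux _ (R (orb a b p s)) (Q (orb a b p s)) _ hη (by rw [hQPR]; rfl) (hC _) (h1 _)
  refine hint.trans ?_
  rw [integral_add (integrable_cont (by fun_prop)) (integrable_cont (by fun_prop)),
    integral_const_mul]
  simp only [integral_const, probReal_univ, one_smul]
  have hA : 0 ≤ C / η + 1 := by positivity
  have h3 := mul_le_mul_of_nonneg_left hR2 hA
  have h4 : (C / η + 1) * η ^ 2 = C * η + η ^ 2 := by field_simp
  nlinarith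

lemma pw_exp (z : ℂ) (T r : ℝ) (hT : 0 < T) (hz : 2 * z.re = Real.log T + r) :
    Complex.exp z * (starRingEnd ℂ) (Complex.exp z) = ((T * Real.exp r : ℝ) : ℂ) ∧
    Complex.exp z - T * (starRingEnd ℂ) (Complex.exp (-z)) =
      Complex.exp z * ((1 - Real.exp (-r) : ℝ) : ℂ) := by
  have h0 : z + (starRingEnd ℂ) z = (Real.log T : ℂ) + (r : ℂ) := by
    rw [Complex.add_conj, hz]; push_cast; rfl
  have hT' : (T : ℂ) = Complex.exp (Real.log T : ℂ) := by
    rw [← Complex.ofReal_exp, Real.exp_log hT]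
  constructor
  · rw [← Complex.exp_conj, ← Complex.exp_add, h0, Complex.exp_add, ← hT']
    push_cast; rfl
  · rw [← Complex.exp_conj, hT', ← Complex.exp_add, map_neg]
    push_cast
    rw [mul_sub, mul_one, ← Complex.exp_add]
    congr 2
    linear_combination -h0

lemma outer_approx (a b : ℤ) (t : C(TT, ℂ)) (T : C(TT, ℝ)) (hT : ∀ p, 0 < T p)
    (htT : ∀ p, t p = (T p : ℂ)) : ∃ C : ℝ, 0 ≤ C ∧ ∀ η : ℝ, 0 < η → η ≤ 1 →
    ∃ Q ∈ VV {u | 0 ≤ ph a b u}, ∃ W ∈ VV {u | 0 ≤ ph a b u}, (∀ p, ‖Q p‖ ≤ C) ∧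
      (∀ p, ‖Q p * (starRingEnd ℂ) (Q p) - t p‖ ≤ η) ∧
      (∀ p, ‖Q p - t p * (starRingEnd ℂ) (W p)‖ ≤ η) := by
  set B : ℝ := ‖T‖ with hB
  have hB0 : 0 ≤ B := norm_nonneg _
  have hTB : ∀ p, T p ≤ B := fun p => (le_abs_self _).trans (T.norm_coe_le_norm p)
  set C : ℝ := 3 * B + 2 with hCdef
  refine ⟨C, by positivity, fun η hη hη1 => ?_⟩
  have hC0 : 0 < C := by positivity
  set δ : ℝ := η / (4 * C) with hδ
  set κ : ℝ := η / (2 * (2 * C + 1)) with hκ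
  have hδ0 : 0 < δ := by positivity
  have hκ0 : 0 < κ := by positivity
  have hδC : C * δ = η / 4 := by rw [hδ]; field_simp
  have hκC : κ * (2 * C + 1) = η / 2 := by rw [hκ]; field_simp
  have hδ1 : δ ≤ 1 := by nlinarith
  have hκ1 : κ ≤ 1 := by nlinarith
  let g : C(TT, ℂ) := ⟨fun p => ((Real.log (T p) : ℝ) : ℂ), by
    refine Complex.continuous_ofReal.comp (Continuous.log T.continuous fun p => (hT p).ne')⟩
  obtain ⟨L, hL, hgL⟩ := VV_dense g hδ0
  obtain ⟨A, hA, E, hE, hLAE⟩ := VV_split _ {u | 0 ≤ ph a b u} hL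
  have hA' : A ∈ VV {u | 0 ≤ ph a b u} := VV_mono (fun u hu => hu.2) hA
  have hE' : star E ∈ VV {u | 0 ≤ ph a b u} := VV_star (fun u hu => by
    have h1 : ph a b u < 0 := not_le.1 hu.2
    change 0 ≤ ph a b (-u)
    rw [ph_neg]; omega) hE
  set Z : C(TT, ℂ) := (1 / 2 : ℂ) • (A + star E) with hZ
  have hZm : Z ∈ VV {u | 0 ≤ ph a b u} := Submodule.smul_mem _ _ (add_mem hA' hE')
  have hZre : ∀ p, 2 * (Z p).re = (L p).re := by
    intro p
    have e1 : Z p = (1 / 2 : ℂ) * (A p + (starRingEnd ℂ) (E p)) := rfl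
    have e2 : L p = A p + E p := by rw [hLAE]; rfl
    have e3 : (1 / 2 : ℂ) = ((1 / 2 : ℝ) : ℂ) := by push_cast; rfl
    rw [e1, e2, e3, Complex.re_ofReal_mul, Complex.add_re, Complex.add_re, Complex.conj_re]
    ring
  obtain ⟨Q, hQ, hQa⟩ := exp_approx a b hZm hκ0
  obtain ⟨W, hW, hWa⟩ := exp_approx a b (neg_mem hZm) hκ0
  have key : ∀ p, ‖Complex.exp (Z p)‖ ≤ C - 1 ∧
      ‖Complex.exp (Z p) * (starRingEnd ℂ) (Complex.exp (Z p)) - t p‖ ≤ η / 2 ∧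
      ‖Complex.exp (Z p) - t p * (starRingEnd ℂ) (Complex.exp (-Z p))‖ ≤ η / 2 := by
    intro p
    set r : ℝ := (L p).re - Real.log (T p) with hr
    have hr1 : |r| ≤ δ := by
      have h1 : ‖g p - L p‖ ≤ δ := ((g - L).norm_coe_le_norm p).trans hgL.le
      have h2 : (g p - L p).re = -r := by
        rw [Complex.sub_re, hr]
        have : (g p).re = Real.log (T p) := Complex.ofReal_re _
        rw [this]; ring
      have h3 := (Complex.abs_re_le_norm (g p - L p)).trans h1
      rwa [h2, abs_neg] at h3
    obtain ⟨k1, k2⟩ := pw_exp (Z p) (T p) r (hT p) (by rw [hZre, hr]; ring)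
    have x1 : |Real.exp r - 1| ≤ 2 * δ :=
      (Real.abs_exp_sub_one_le (hr1.trans hδ1)).trans (by linarith)
    have x2 : |Real.exp (-r) - 1| ≤ 2 * δ :=
      (Real.abs_exp_sub_one_le (by rw [abs_neg]; exact hr1.trans hδ1)).trans
        (by rw [abs_neg]; linarith)
    have hG : ‖Complex.exp (Z p)‖ ≤ C - 1 := by
      have h1 : ‖Complex.exp (Z p)‖ ^ 2 = T p * Real.exp r := by
        rw [Complex.mul_conj, Complex.normSq_eq_norm_sq] at k1
        exact_mod_cast k1
      have h2 : Real.exp r ≤ 3 := by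
        have := (abs_le.1 x1).2
        linarith
      have h3 : T p * Real.exp r ≤ B * 3 :=
        mul_le_mul (hTB p) h2 (Real.exp_pos _).le hB0
      nlinarith [norm_nonneg (Complex.exp (Z p)), sq_nonneg (‖Complex.exp (Z p)‖ - 1)]
    refine ⟨hG, ?_, ?_⟩
    · rw [k1, htT, ← Complex.ofReal_sub, Complex.norm_real, Real.norm_eq_abs]
      have : T p * Real.exp r - T p = T p * (Real.exp r - 1) := by ring
      rw [this, abs_mul, abs_of_pos (hT p)]
      have := mul_le_mul (hTB p) x1 (abs_nonneg _) hB0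
      nlinarith
    · rw [htT, k2, norm_mul, Complex.norm_real, Real.norm_eq_abs, abs_sub_comm]
      have := mul_le_mul hG x2 (abs_nonneg _) (by linarith)
      nlinarith
  have hQle : ∀ p, ‖Q p‖ ≤ C := by
    intro p
    have h1 := (key p).1
    have h2 : Q p = Complex.exp (Z p) - (Complex.exp (Z p) - Q p) := by ring
    rw [h2]
    refine (norm_sub_le _ _).trans ?_
    have := hQa p
    linarith
  refine ⟨Q, hQ, W, hW, hQle, fun p => ?_, fun p => ?_⟩
  · have h2 : Q p * (starRingEnd ℂ) (Q p) - t p =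
        (Complex.exp (Z p) * (starRingEnd ℂ) (Complex.exp (Z p)) - t p) -
        ((Complex.exp (Z p) - Q p) * (starRingEnd ℂ) (Complex.exp (Z p)) +
          Q p * (starRingEnd ℂ) (Complex.exp (Z p) - Q p)) := by
      rw [map_sub]; ring
    rw [h2]
    refine (norm_sub_le _ _).trans ?_
    have e1 : ‖(Complex.exp (Z p) - Q p) * (starRingEnd ℂ) (Complex.exp (Z p))‖ ≤ κ * C := by
      rw [norm_mul, RCLike.norm_conj]
      exact mul_le_mul (hQa p).le (by linarith [(key p).1]) (norm_nonneg _) hκ0.le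
    have e2 : ‖Q p * (starRingEnd ℂ) (Complex.exp (Z p) - Q p)‖ ≤ C * κ := by
      rw [norm_mul, RCLike.norm_conj]
      exact mul_le_mul (hQle p) (hQa p).le (norm_nonneg _) hC0.le
    have e3 := (key p).2.1
    have e4 := norm_add_le ((Complex.exp (Z p) - Q p) * (starRingEnd ℂ) (Complex.exp (Z p)))
      (Q p * (starRingEnd ℂ) (Complex.exp (Z p) - Q p))
    nlinarith
  · have h2 : Q p - t p * (starRingEnd ℂ) (W p) =
        (Complex.exp (Z p) - t p * (starRingEnd ℂ) (Complex.exp (-Z p))) -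
        ((Complex.exp (Z p) - Q p) -
          t p * (starRingEnd ℂ) (Complex.exp (-Z p) - W p)) := by
      rw [map_sub]; ring
    rw [h2]
    refine (norm_sub_le _ _).trans ?_
    have e1 := (hQa p).le
    have e2 : ‖t p * (starRingEnd ℂ) (Complex.exp (-Z p) - W p)‖ ≤ B * κ := by
      rw [norm_mul, RCLike.norm_conj]
      refine mul_le_mul ?_ (hWa p).le (norm_nonneg _) hB0
      rw [htT, Complex.norm_real]
      exact T.norm_coe_le_norm p
    have e3 := (key p).2.2
    have e4 := norm_sub_le (Complex.exp (Z p) - Q p)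
      (t p * (starRingEnd ℂ) (Complex.exp (-Z p) - W p))
    nlinarith

lemma main_approx (a b : ℤ) (N : ℕ) {t : C(TT, ℂ)} (ht : t ∈ VV {u | |ph a b u| ≤ N})
    (hpos : ∀ p, ∃ r : ℝ, 0 ≤ r ∧ t p = (r : ℂ)) {ε : ℝ} (hε : 0 < ε) :
    ∃ P ∈ VV {u | 0 ≤ ph a b u ∧ ph a b u ≤ N},
      ∀ p, ‖P p * (starRingEnd ℂ) (P p) - t p‖ ≤ ε := by
  set t' : C(TT, ℂ) := t + ((ε / 2 : ℝ) : ℂ) • (1 : C(TT, ℂ)) with ht'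
  have ht'p : ∀ p, t' p = t p + ((ε / 2 : ℝ) : ℂ) := by
    intro p; simp [ht']
  have ht'm : t' ∈ VV {u | |ph a b u| ≤ N} := by
    refine add_mem ht (Submodule.smul_mem _ _ ?_)
    rw [← chi_zero]
    exact chi_mem (by simp [ph])
  let T : C(TT, ℝ) := ⟨fun p => (t' p).re, by fun_prop⟩
  have hT : ∀ p, 0 < T p ∧ t' p = (T p : ℂ) := by
    intro p
    obtain ⟨r, hr, h⟩ := hpos p
    have h1 : t' p = ((r + ε / 2 : ℝ) : ℂ) := by rw [ht'p, h]; push_cast; rfl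
    have h2 : T p = r + ε / 2 := by
      change (t' p).re = _
      rw [h1, Complex.ofReal_re]
    rw [h2]
    exact ⟨by positivity, h1⟩
  obtain ⟨C, hC0, hC⟩ := outer_approx a b t' T (fun p => (hT p).1) (fun p => (hT p).2)
  set K : ℝ := (2 * N + 1) * (2 * C + 2) with hK
  have hK0 : 0 < K := by positivity
  obtain ⟨Q, hQ, W, hW, q1, q2, q3⟩ := hC (min 1 (ε / 2 / K)) (by positivity) (min_le_left _ _)
  obtain ⟨P, hP, hPa⟩ := trunc a b N hQ hW ht'm (by positivity) (min_le_left _ _) q1 q2 q3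
  refine ⟨P, hP, fun p => ?_⟩
  have h1 := hPa p
  have h2 : (2 * (N : ℝ) + 1) * ((2 * C + 2) * min 1 (ε / 2 / K)) ≤ ε / 2 := by
    rw [← mul_assoc, ← hK]
    calc K * min 1 (ε / 2 / K) ≤ K * (ε / 2 / K) := by gcongr; exact min_le_right _ _
      _ = ε / 2 := by field_simp
  have h3 : P p * (starRingEnd ℂ) (P p) - t p =
      (P p * (starRingEnd ℂ) (P p) - t' p) + ((ε / 2 : ℝ) : ℂ) := by
    rw [ht'p]; ring
  rw [h3]
  refine (norm_add_le _ _).trans ?_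
  rw [Complex.norm_real, Real.norm_eq_abs, abs_of_pos (by positivity)]
  linarith

lemma F2_iff (q : ℚ) {β : ℝ} (hβ : 0 < β) : ∃ M : ℕ, ∀ u : ℤ × ℤ,
    u ∈ F2set (q : ℝ) β ↔ |ph q.num q.den u| ≤ M := by
  have hd : (0 : ℝ) < q.den := by exact_mod_cast q.den_pos
  have hpos : 0 < ⌈(q.den : ℝ) * β⌉₊ := Nat.ceil_pos.2 (by positivity)
  refine ⟨⌈(q.den : ℝ) * β⌉₊ - 1, fun u => ?_⟩
  have h1 : ((ph q.num q.den u : ℤ) : ℝ) = q.den * ((u.2 : ℝ) - u.1 * (q : ℝ)) := by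
    have : (q : ℝ) = q.num / q.den := by exact_mod_cast (Rat.num_div_den q).symm
    rw [this, ph]; push_cast; field_simp
  have h2 : u ∈ F2set (q : ℝ) β ↔ (((ph q.num q.den u).natAbs : ℕ) : ℝ) < q.den * β := by
    rw [Nat.cast_natAbs, Int.cast_abs, h1, abs_mul, abs_of_pos hd]
    exact (mul_lt_mul_iff_right₀ hd).symm
  rw [h2, ← Nat.lt_ceil]
  rw [← Int.natCast_natAbs]
  omega

lemma hard_dir (q : ℚ) {β : ℝ} (hβ : 0 < β) {t : TT → ℂ} (h1 : IsTrigPoly2 t)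
    (h2 : freq2 t ⊆ diffSet (F2set (q : ℝ) β)) (h3 : ∀ p, ∃ r : ℝ, 0 ≤ r ∧ t p = (r : ℂ)) :
    t ∈ U2 (F2set (q : ℝ) β) := by
  obtain ⟨M, hM⟩ := F2_iff q hβ
  refine ⟨h1, ?_⟩
  obtain ⟨f, hf, rfl⟩ := T2_iff.1 (⟨h1, h2⟩ : t ∈ T2 _)
  have hf' : f ∈ VV {u | |ph q.num q.den u| ≤ ((2 * M : ℕ) : ℤ)} := by
    refine VV_mono ?_ hf
    rintro _ ⟨u, hu, v, hv, rfl⟩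
    rw [hM, abs_le] at hu hv
    change |ph q.num q.den (u - v)| ≤ _
    rw [sub_eq_add_neg, ph_add, ph_neg, abs_le]
    push_cast
    omega
  obtain ⟨w, hw⟩ : ∃ w : ℤ × ℤ, ph q.num q.den w = -(M : ℤ) := by
    have hco : IsCoprime q.num (q.den : ℤ) := by
      rw [Int.isCoprime_iff_nat_coprime]; exact q.reduced
    obtain ⟨x, y, hxy⟩ := hco
    refine ⟨(M * x, -M * y), ?_⟩
    simp only [ph]
    linear_combination (-(M : ℤ)) * hxy
  have hex : ∀ n : ℕ, ∃ s ∈ S2 (F2set (q : ℝ) β), ∀ p, ‖s p - f p‖ ≤ 1 / ((n : ℝ) + 1) := by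
    intro n
    obtain ⟨P, hP, hPa⟩ := main_approx q.num q.den (2 * M) hf' h3
      (ε := 1 / ((n : ℝ) + 1)) (by positivity)
    refine ⟨_, ⟨(P * chi w : C(TT, ℂ)), T2_iff.2 ⟨_, VV_mul (G := {w}) ?_ hP (chi_mem rfl), rfl⟩,
      rfl⟩, fun p => ?_⟩
    · intro u hu v hv
      rw [Set.mem_singleton_iff.1 hv, hM, ph_add, hw]
      have h1 : 0 ≤ ph q.num q.den u ∧ ph q.num q.den u ≤ ((2 * M : ℕ) : ℤ) := hu
      rw [abs_le]; push_cast at h1; omega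
    · have hchi : chi w p * (starRingEnd ℂ) (chi w p) = 1 := by
        have : chi w * star (chi w) = 1 := by rw [← chi_neg, ← chi_add, add_neg_cancel, chi_zero]
        exact congrArg (fun h : C(TT, ℂ) => h p) this
      refine le_trans (le_of_eq ?_) (hPa p)
      congr 1
      simp only [ContinuousMap.mul_apply, map_mul]
      linear_combination (P p * (starRingEnd ℂ) (P p)) * hchi
  choose s hs hsa using hex
  refine ⟨s, hs, ?_⟩
  rw [Metric.tendstoUniformly_iff]
  intro ε hε
  have := (tendsto_one_div_add_atTop_nhds_zero_nat (𝕜 := ℝ)).eventually (gt_mem_nhds hε)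
  filter_upwards [this] with n hn p
  rw [dist_comm, dist_eq_norm]
  exact (hsa n p).trans_lt hn

/-- If `α` is rational then for every `β > 0` the set `F₂(α,β)` has Property A. -/
theorem statement16 (α : ℝ) (hα : ∃ q : ℚ, α = (q : ℝ)) (β : ℝ) (hβ : 0 < β) :
    PropertyA (F2set α β) := by
  obtain ⟨q, rfl⟩ := hα
  ext t
  exact ⟨fun h => easy_dir h, fun h => hard_dir q hβ h.1 h.2.1 h.2.2⟩
end
end

section
/- Let α ∈ ℝ, β > 0, and let g = (a b; c d) be an integer matrix with ad − bc = 1 and a + bα ≠ 0, acting on ℤ² by g(j,k) = (aj + bk, cj + dk). Then the image of F₂(α,β) under g equals F₂((c + dα)/(a + bα), β/|a + bα|). -/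
open Complex MeasureTheory Real Filter

noncomputable section

/-- For `g = (a b; c d) ∈ SL(2,ℤ)` acting on `ℤ²` by `g(j,k) = (aj+bk, cj+dk)`, with
`a + bα ≠ 0`, the image of `F₂(α,β)` under `g` is `F₂((c+dα)/(a+bα), β/|a+bα|)`. -/
theorem statement18 (α β : ℝ) (hβ : 0 < β) (a b c d : ℤ)
    (hdet : a * d - b * c = 1) (hα : (a : ℝ) + (b : ℝ) * α ≠ 0) :
    (fun jk : ℤ × ℤ => (a * jk.1 + b * jk.2, c * jk.1 + d * jk.2)) '' F2set α β =
      F2set (((c : ℝ) + (d : ℝ) * α) / ((a : ℝ) + (b : ℝ) * α))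
        (β / |(a : ℝ) + (b : ℝ) * α|) := by
  have hdetR : (a : ℝ) * d - b * c = 1 := by exact_mod_cast hdet
  have key : ∀ j k : ℤ,
      (((a * j + b * k, c * j + d * k) : ℤ × ℤ) ∈
        F2set (((c : ℝ) + (d : ℝ) * α) / ((a : ℝ) + (b : ℝ) * α))
          (β / |(a : ℝ) + (b : ℝ) * α|)) ↔ ((j, k) : ℤ × ℤ) ∈ F2set α β := by
    intro j k
    simp only [F2set, Set.mem_setOf_eq]
    have h : (((c * j + d * k : ℤ) : ℝ)) - ((a * j + b * k : ℤ) : ℝ) *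
        (((c : ℝ) + (d : ℝ) * α) / ((a : ℝ) + (b : ℝ) * α))
        = ((k : ℝ) - j * α) / ((a : ℝ) + (b : ℝ) * α) := by
      rw [eq_div_iff hα, sub_mul, mul_assoc, div_mul_cancel₀ _ hα]
      push_cast
      linear_combination ((k : ℝ) - j * α) * hdetR
    rw [h, abs_div, div_lt_div_iff_of_pos_right (abs_pos.mpr hα)]
  ext ⟨m, n⟩
  constructor
  · rintro ⟨⟨j, k⟩, hjk, he⟩
    rw [← he]
    exact (key j k).2 hjk
  · intro h
    have e : ((a * (d * m - b * n) + b * (a * n - c * m),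
        c * (d * m - b * n) + d * (a * n - c * m)) : ℤ × ℤ) = (m, n) := by
      ext
      · linear_combination m * hdet
      · linear_combination n * hdet
    refine ⟨(d * m - b * n, a * n - c * m), (key _ _).1 ?_, e⟩
    rw [e]
    exact h
end
end
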